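/- Let E be a finite quiver and i ∈ E^0 a vertex. The following conditions are equivalent: (1) the left P_k(Ē)-module P_k(Ē)p_i is finite-dimensional over k; (2) the left L_k(E)-module L_k(E)p_i is a finite direct sum of simple submodules; (3) L_k(E)p_i has finite length; (4) the subquiver of E consisting of all vertices and arrows lying on paths of E starting at i is acyclic, i.e. no cycle of E can be reached by a path starting at i. -/

import Mathlib

namespace LPA

/-- A finite quiver: finite sets of vertices and arrows with source and target maps. -/
structure FinQuiver : Type 1 where
  V : Type
  A : Type
  [fintypeV : Fintype V]
  [decEqV : DecidableEq V]
  [fintypeA : Fintype A]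
  [decEqA : DecidableEq A]
  src : A → V
  tgt : A → V

attribute [instance] FinQuiver.fintypeV FinQuiver.decEqV FinQuiver.fintypeA FinQuiver.decEqA

/-- The inverse quiver: all arrows reversed. -/
def FinQuiver.rev (Q : FinQuiver) : FinQuiver where
  V := Q.V
  A := Q.A
  fintypeV := Q.fintypeV
  decEqV := Q.decEqV
  fintypeA := Q.fintypeA
  decEqA := Q.decEqA
  src := Q.tgt
  tgt := Q.src

/-- Generators of the path algebra: a trivial path `p v` for each vertex and an arrow `e` for
each arrow. -/
inductive PathGen (Q : FinQuiver) : Type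
  | vertex (v : Q.V) : PathGen Q
  | edge (e : Q.A) : PathGen Q

/-- Defining relations of the path algebra: the trivial paths are pairwise orthogonal
idempotents summing to `1`, and `p (src e) * e = e = e * p (tgt e)`. -/
inductive PathRel (k : Type) [CommRing k] (Q : FinQuiver) :
    FreeAlgebra k (PathGen Q) → FreeAlgebra k (PathGen Q) → Prop
  | vertex_mul_self (v : Q.V) :
      PathRel k Q (FreeAlgebra.ι k (PathGen.vertex v) * FreeAlgebra.ι k (PathGen.vertex v))
        (FreeAlgebra.ι k (PathGen.vertex v))
  | vertex_mul_ne (v w : Q.V) (h : v ≠ w) :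
      PathRel k Q (FreeAlgebra.ι k (PathGen.vertex v) * FreeAlgebra.ι k (PathGen.vertex w)) 0
  | sum_vertex :
      PathRel k Q (∑ v : Q.V, FreeAlgebra.ι k (PathGen.vertex v)) 1
  | src_mul (e : Q.A) :
      PathRel k Q
        (FreeAlgebra.ι k (PathGen.vertex (Q.src e)) * FreeAlgebra.ι k (PathGen.edge e))
        (FreeAlgebra.ι k (PathGen.edge e))
  | mul_tgt (e : Q.A) :
      PathRel k Q
        (FreeAlgebra.ι k (PathGen.edge e) * FreeAlgebra.ι k (PathGen.vertex (Q.tgt e)))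
        (FreeAlgebra.ι k (PathGen.edge e))

/-- The path algebra `P_k(Q)` of a finite quiver `Q`, presented by generators and relations. -/
def PathAlg (k : Type) [CommRing k] (Q : FinQuiver) : Type :=
  RingQuot (PathRel k Q)

variable (k : Type) [CommRing k] (Q : FinQuiver)

noncomputable instance : Ring (PathAlg k Q) :=
  inferInstanceAs (Ring (RingQuot (PathRel k Q)))

noncomputable instance : Algebra k (PathAlg k Q) :=
  inferInstanceAs (Algebra k (RingQuot (PathRel k Q)))

/-- The quotient map from the free algebra onto the path algebra. -/
noncomputable def PathAlg.mk : FreeAlgebra k (PathGen Q) →ₐ[k] PathAlg k Q :=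
  RingQuot.mkAlgHom k (PathRel k Q)

/-- The trivial path (vertex idempotent) `p v` in the path algebra. -/
noncomputable def PathAlg.p (v : Q.V) : PathAlg k Q :=
  PathAlg.mk k Q (FreeAlgebra.ι k (PathGen.vertex v))

/-- The arrow `e` in the path algebra. -/
noncomputable def PathAlg.arrow (e : Q.A) : PathAlg k Q :=
  PathAlg.mk k Q (FreeAlgebra.ι k (PathGen.edge e))

theorem PathAlg.mk_rel {x y : FreeAlgebra k (PathGen Q)} (h : PathRel k Q x y) :
    PathAlg.mk k Q x = PathAlg.mk k Q y :=
  RingQuot.mkAlgHom_rel k h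

theorem PathAlg.p_mul_self (v : Q.V) : PathAlg.p k Q v * PathAlg.p k Q v = PathAlg.p k Q v := by
  have h := PathAlg.mk_rel k Q (PathRel.vertex_mul_self v)
  simpa [map_mul, PathAlg.p] using h

theorem PathAlg.p_mul_ne (v w : Q.V) (hvw : v ≠ w) :
    PathAlg.p k Q v * PathAlg.p k Q w = 0 := by
  have h := PathAlg.mk_rel k Q (PathRel.vertex_mul_ne v w hvw)
  simpa [map_mul, PathAlg.p] using h

theorem PathAlg.sum_p : (∑ v : Q.V, PathAlg.p k Q v) = 1 := by
  have h := PathAlg.mk_rel k Q (PathRel.sum_vertex)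
  simpa [map_sum, PathAlg.p] using h

theorem PathAlg.arrow_mul_tgt (e : Q.A) :
    PathAlg.arrow k Q e * PathAlg.p k Q (Q.tgt e) = PathAlg.arrow k Q e := by
  have h := PathAlg.mk_rel k Q (PathRel.mul_tgt e)
  simpa [map_mul, PathAlg.p, PathAlg.arrow] using h

theorem PathAlg.src_mul_arrow (e : Q.A) :
    PathAlg.p k Q (Q.src e) * PathAlg.arrow k Q e = PathAlg.arrow k Q e := by
  have h := PathAlg.mk_rel k Q (PathRel.src_mul e)
  simpa [map_mul, PathAlg.p, PathAlg.arrow] using h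

/-- The set of vertices `{p v | v ∈ Q.V}` of the path algebra, as a finite set. -/
noncomputable def vertexFinset : Finset (PathAlg k Q) :=
  letI := Classical.decEq (PathAlg k Q)
  Finset.univ.image (PathAlg.p k Q)

end LPA

namespace LPA

/-- Generators of the Leavitt path algebra: vertex idempotents, arrows, and ghost arrows. -/
inductive LGen (Q : FinQuiver) : Type
  | vertex (v : Q.V) : LGen Q
  | edge (e : Q.A) : LGen Q
  | ghost (e : Q.A) : LGen Q

/-- Defining relations of the Leavitt path algebra `L_k(E)`: (V), (E1), (E2), (CK1), (CK2),
together with `∑ p_v = 1`. -/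
inductive LeavittRel (k : Type) [CommRing k] (Q : FinQuiver) :
    FreeAlgebra k (LGen Q) → FreeAlgebra k (LGen Q) → Prop
  | vertex_mul_self (v : Q.V) :
      LeavittRel k Q (FreeAlgebra.ι k (LGen.vertex v) * FreeAlgebra.ι k (LGen.vertex v))
        (FreeAlgebra.ι k (LGen.vertex v))
  | vertex_mul_ne (v w : Q.V) (h : v ≠ w) :
      LeavittRel k Q (FreeAlgebra.ι k (LGen.vertex v) * FreeAlgebra.ι k (LGen.vertex w)) 0
  | sum_vertex :
      LeavittRel k Q (∑ v : Q.V, FreeAlgebra.ι k (LGen.vertex v)) 1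
  | src_mul (e : Q.A) :
      LeavittRel k Q (FreeAlgebra.ι k (LGen.vertex (Q.src e)) * FreeAlgebra.ι k (LGen.edge e))
        (FreeAlgebra.ι k (LGen.edge e))
  | mul_tgt (e : Q.A) :
      LeavittRel k Q (FreeAlgebra.ι k (LGen.edge e) * FreeAlgebra.ι k (LGen.vertex (Q.tgt e)))
        (FreeAlgebra.ι k (LGen.edge e))
  | tgt_mul_ghost (e : Q.A) :
      LeavittRel k Q (FreeAlgebra.ι k (LGen.vertex (Q.tgt e)) * FreeAlgebra.ι k (LGen.ghost e))
        (FreeAlgebra.ι k (LGen.ghost e))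
  | ghost_mul_src (e : Q.A) :
      LeavittRel k Q (FreeAlgebra.ι k (LGen.ghost e) * FreeAlgebra.ι k (LGen.vertex (Q.src e)))
        (FreeAlgebra.ι k (LGen.ghost e))
  | ghost_mul_edge_self (e : Q.A) :
      LeavittRel k Q (FreeAlgebra.ι k (LGen.ghost e) * FreeAlgebra.ι k (LGen.edge e))
        (FreeAlgebra.ι k (LGen.vertex (Q.tgt e)))
  | ghost_mul_edge_ne (e f : Q.A) (h : e ≠ f) :
      LeavittRel k Q (FreeAlgebra.ι k (LGen.ghost e) * FreeAlgebra.ι k (LGen.edge f)) 0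
  | cuntz_krieger (v : Q.V) (h : ∃ e : Q.A, Q.src e = v) :
      LeavittRel k Q
        (∑ e ∈ Finset.univ.filter (fun e : Q.A => Q.src e = v),
          FreeAlgebra.ι k (LGen.edge e) * FreeAlgebra.ι k (LGen.ghost e))
        (FreeAlgebra.ι k (LGen.vertex v))

/-- The Leavitt path algebra `L_k(E)`. -/
def Leavitt (k : Type) [CommRing k] (Q : FinQuiver) : Type :=
  RingQuot (LeavittRel k Q)

variable (k : Type) [CommRing k] (Q : FinQuiver)

noncomputable instance : Ring (Leavitt k Q) :=
  inferInstanceAs (Ring (RingQuot (LeavittRel k Q)))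

noncomputable instance : Algebra k (Leavitt k Q) :=
  inferInstanceAs (Algebra k (RingQuot (LeavittRel k Q)))

/-- The quotient map from the free algebra onto the Leavitt path algebra. -/
noncomputable def Leavitt.mk : FreeAlgebra k (LGen Q) →ₐ[k] Leavitt k Q :=
  RingQuot.mkAlgHom k (LeavittRel k Q)

/-- The vertex idempotent `p v` in the Leavitt path algebra. -/
noncomputable def Leavitt.p (v : Q.V) : Leavitt k Q :=
  Leavitt.mk k Q (FreeAlgebra.ι k (LGen.vertex v))

/-- The arrow `e` in the Leavitt path algebra. -/
noncomputable def Leavitt.ed (e : Q.A) : Leavitt k Q :=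
  Leavitt.mk k Q (FreeAlgebra.ι k (LGen.edge e))

/-- The ghost arrow `ē` in the Leavitt path algebra. -/
noncomputable def Leavitt.gh (e : Q.A) : Leavitt k Q :=
  Leavitt.mk k Q (FreeAlgebra.ι k (LGen.ghost e))

theorem Leavitt.mk_rel {x y : FreeAlgebra k (LGen Q)} (h : LeavittRel k Q x y) :
    Leavitt.mk k Q x = Leavitt.mk k Q y :=
  RingQuot.mkAlgHom_rel k h

theorem Leavitt.p_mul_self (v : Q.V) : Leavitt.p k Q v * Leavitt.p k Q v = Leavitt.p k Q v := by
  have h := Leavitt.mk_rel k Q (LeavittRel.vertex_mul_self v)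
  simpa [map_mul, Leavitt.p] using h

theorem Leavitt.p_mul_ne (v w : Q.V) (hvw : v ≠ w) :
    Leavitt.p k Q v * Leavitt.p k Q w = 0 := by
  have h := Leavitt.mk_rel k Q (LeavittRel.vertex_mul_ne v w hvw)
  simpa [map_mul, Leavitt.p] using h

theorem Leavitt.sum_p : (∑ v : Q.V, Leavitt.p k Q v) = 1 := by
  have h := Leavitt.mk_rel k Q (LeavittRel.sum_vertex)
  simpa [map_sum, Leavitt.p] using h

theorem Leavitt.tgt_mul_gh (e : Q.A) :
    Leavitt.p k Q (Q.tgt e) * Leavitt.gh k Q e = Leavitt.gh k Q e := by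
  have h := Leavitt.mk_rel k Q (LeavittRel.tgt_mul_ghost e)
  simpa [map_mul, Leavitt.p, Leavitt.gh] using h

theorem Leavitt.gh_mul_src (e : Q.A) :
    Leavitt.gh k Q e * Leavitt.p k Q (Q.src e) = Leavitt.gh k Q e := by
  have h := Leavitt.mk_rel k Q (LeavittRel.ghost_mul_src e)
  simpa [map_mul, Leavitt.p, Leavitt.gh] using h

/-- The canonical embedding `P_k(Ē) → L_k(E)` of the path algebra of the inverse quiver into
the Leavitt path algebra, sending `p v ↦ p v` and each reversed arrow `ē ↦ ē`. -/
noncomputable def revToLeavitt : PathAlg k Q.rev →ₐ[k] Leavitt k Q :=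
  RingQuot.liftAlgHom k ⟨((FreeAlgebra.lift k fun g =>
    match g with
    | PathGen.vertex v => Leavitt.p k Q v
    | PathGen.edge e => Leavitt.gh k Q e : FreeAlgebra k (PathGen Q.rev) →ₐ[k] Leavitt k Q)), by
      intro x y h
      induction h with
      | vertex_mul_self v =>
          simp only [map_mul, FreeAlgebra.lift_ι_apply]
          exact Leavitt.p_mul_self k Q v
      | vertex_mul_ne v w h =>
          simp only [map_mul, map_zero, FreeAlgebra.lift_ι_apply]
          exact Leavitt.p_mul_ne k Q v w h
      | sum_vertex =>
          simp only [map_sum, map_one, FreeAlgebra.lift_ι_apply]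
          exact Leavitt.sum_p k Q
      | src_mul e =>
          simp only [map_mul, FreeAlgebra.lift_ι_apply]
          exact Leavitt.tgt_mul_gh k Q e
      | mul_tgt e =>
          simp only [map_mul, FreeAlgebra.lift_ι_apply]
          exact Leavitt.gh_mul_src k Q e⟩

/-- The canonical embedding `P_k(E) → L_k(E)` of the path algebra into the Leavitt path
algebra, sending `p v ↦ p v` and each arrow `e ↦ e`. -/
noncomputable def pathToLeavitt : PathAlg k Q →ₐ[k] Leavitt k Q :=
  RingQuot.liftAlgHom k ⟨((FreeAlgebra.lift k fun g =>
    match g with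
    | PathGen.vertex v => Leavitt.p k Q v
    | PathGen.edge e => Leavitt.ed k Q e : FreeAlgebra k (PathGen Q) →ₐ[k] Leavitt k Q)), by
      intro x y h
      induction h with
      | vertex_mul_self v =>
          simp only [map_mul, FreeAlgebra.lift_ι_apply]
          exact Leavitt.p_mul_self k Q v
      | vertex_mul_ne v w h =>
          simp only [map_mul, map_zero, FreeAlgebra.lift_ι_apply]
          exact Leavitt.p_mul_ne k Q v w h
      | sum_vertex =>
          simp only [map_sum, map_one, FreeAlgebra.lift_ι_apply]
          exact Leavitt.sum_p k Q
      | src_mul e =>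
          simp only [map_mul, FreeAlgebra.lift_ι_apply]
          have h := Leavitt.mk_rel k Q (LeavittRel.src_mul e)
          simpa [map_mul, Leavitt.p, Leavitt.ed] using h
      | mul_tgt e =>
          simp only [map_mul, FreeAlgebra.lift_ι_apply]
          have h := Leavitt.mk_rel k Q (LeavittRel.mul_tgt e)
          simpa [map_mul, Leavitt.p, Leavitt.ed] using h⟩

end LPA

namespace LPA

open TensorProduct

variable (P L : Type) [Ring P] [Ring L] (φ : P →+* L)

/-- The subgroup of relations defining the balanced tensor product `L ⊗_P M` (where `L` is a
right `P`-module via `φ` and `M` a left `P`-module) as a quotient of `L ⊗_ℤ M`. -/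
noncomputable def trel (M : Type) [AddCommGroup M] [Module P M] :
    Submodule L (TensorProduct ℤ L M) :=
  Submodule.span L
    {z | ∃ (l : L) (p : P) (m : M), z = (l * φ p) ⊗ₜ[ℤ] m - l ⊗ₜ[ℤ] (p • m)}

/-- The balanced tensor product `L ⊗_P M`, a left `L`-module. -/
abbrev TensorPhi (M : Type) [AddCommGroup M] [Module P M] : Type :=
  TensorProduct ℤ L M ⧸ trel P L φ M

/-- Functoriality of `L ⊗_P -` : the map induced on balanced tensor products by a `P`-linear
map `f : M → N`. -/
noncomputable def tmap {M N : Type} [AddCommGroup M] [Module P M] [AddCommGroup N]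
    [Module P N] (f : M →ₗ[P] N) : TensorPhi P L φ M →ₗ[L] TensorPhi P L φ N :=
  Submodule.mapQ _ _
    (TensorProduct.AlgebraTensorModule.map (LinearMap.id : L →ₗ[L] L)
      f.toAddMonoidHom.toIntLinearMap)
    (by
      refine Submodule.span_le.mpr ?_
      rintro z ⟨l, p, m, rfl⟩
      simp only [SetLike.mem_coe, Submodule.mem_comap, map_sub,
        TensorProduct.AlgebraTensorModule.map_tmul, LinearMap.id_coe, id_eq,
        AddMonoidHom.coe_toIntLinearMap, LinearMap.toAddMonoidHom_coe]
      exact Submodule.subset_span ⟨l, p, f m, by rw [f.map_smul]⟩)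

/-- `L` is flat as a right `P`-module (via `φ : P → L`): the functor `L ⊗_P -` preserves
injectivity. -/
def RightFlat : Prop :=
  ∀ (M N : Type) [AddCommGroup M] [Module P M] [AddCommGroup N] [Module P N],
    ∀ f : M →ₗ[P] N, Function.Injective f → Function.Injective (tmap P L φ f)

end LPA

namespace LPA

/-- Right multiplication by a fixed element, as an endomorphism of the left regular module. -/
noncomputable def rightMul (R : Type) [Ring R] (x : R) : R →ₗ[R] R where
  toFun y := y * x
  map_add' a b := add_mul a b x
  map_smul' r y := by simp [smul_eq_mul, mul_assoc]

variable (k : Type) [CommRing k] (Q : FinQuiver)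

/-- The principal left ideal `P_k(Ē)·p_v` of the path algebra of the inverse quiver. -/
noncomputable def pIdeal (v : Q.V) : Submodule (PathAlg k Q.rev) (PathAlg k Q.rev) :=
  LinearMap.range (rightMul (PathAlg k Q.rev) (PathAlg.p k Q.rev v))

/-- The principal left ideal `L_k(E)·p_v` of the Leavitt path algebra. -/
noncomputable def pIdealL (v : Q.V) : Submodule (Leavitt k Q) (Leavitt k Q) :=
  LinearMap.range (rightMul (Leavitt k Q) (Leavitt.p k Q v))

/-- A sink: a vertex emitting no arrows. -/
def IsSink (v : Q.V) : Prop := ∀ e : Q.A, Q.src e ≠ v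

/-- For a non-sink vertex `i` (and, degenerately, for a sink, where the domain is trivial),
the left `P_k(Ē)`-module homomorphism
`ν_i : ⊕_{e ∈ s⁻¹(i)} P_k(Ē)·p_{r(e)} → P_k(Ē)·p_i`, `(r_e) ↦ ∑ r_e·ē`. -/
noncomputable def nu (i : Q.V) :
    ((e : {e : Q.A // Q.src e = i}) → ↥(pIdeal k Q (Q.tgt e.1)))
      →ₗ[PathAlg k Q.rev] ↥(pIdeal k Q i) :=
  LinearMap.codRestrict (pIdeal k Q i)
    { toFun := fun x =>
        ∑ e : {e : Q.A // Q.src e = i}, ((x e : PathAlg k Q.rev) * PathAlg.arrow k Q.rev e.1)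
      map_add' := by
        intro a b
        simp [add_mul, Finset.sum_add_distrib]
      map_smul' := by
        intro r x
        simp [smul_eq_mul, Finset.mul_sum, mul_assoc] }
    (by
      intro x
      refine ⟨∑ e : {e : Q.A // Q.src e = i},
        ((x e : PathAlg k Q.rev) * PathAlg.arrow k Q.rev e.1), ?_⟩
      simp only [rightMul, LinearMap.coe_mk, AddHom.coe_mk, Finset.sum_mul]
      refine Finset.sum_congr rfl fun e _ => ?_
      obtain ⟨e, he⟩ := e
      subst he
      rw [mul_assoc]
      congr 1
      exact PathAlg.arrow_mul_tgt k Q.rev e)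

/-- The cokernel of `ν_i`, a finite-dimensional simple `P_k(Ē)`-module. -/
abbrev CokerNu (i : Q.V) : Type :=
  ↥(pIdeal k Q i) ⧸ LinearMap.range (nu k Q i)

/-- Reachability by a (possibly trivial) path in the quiver `E`. -/
inductive Reaches : Q.V → Q.V → Prop
  | refl (v : Q.V) : Reaches v v
  | step (e : Q.A) {w : Q.V} : Reaches (Q.tgt e) w → Reaches (Q.src e) w

end LPA

namespace LPA

/-- A composition series `0 = c 0 < c 1 < … < c ℓ = M` with simple factors. -/
def IsCompSeries {R M : Type} [Ring R] [AddCommGroup M] [Module R M] (ℓ : ℕ)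
    (c : Fin (ℓ + 1) → Submodule R M) : Prop :=
  c 0 = ⊥ ∧ c (Fin.last ℓ) = ⊤ ∧
    ∀ i : Fin ℓ, c i.castSucc < c i.succ ∧
      IsSimpleModule R
        (↥(c i.succ) ⧸ Submodule.comap (c i.succ).subtype (c i.castSucc))

/-- The `i`-th factor `c (i+1) / c i` of a series of submodules. -/
abbrev SeriesFactor {R M : Type} [Ring R] [AddCommGroup M] [Module R M] {ℓ : ℕ}
    (c : Fin (ℓ + 1) → Submodule R M) (i : Fin ℓ) : Type :=
  ↥(c i.succ) ⧸ Submodule.comap (c i.succ).subtype (c i.castSucc)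

end LPA

namespace LPA

theorem Leavitt.src_mul_ed (k : Type) [CommRing k] (Q : FinQuiver) (e : Q.A) :
    Leavitt.p k Q (Q.src e) * Leavitt.ed k Q e = Leavitt.ed k Q e := by
  have h := Leavitt.mk_rel k Q (LeavittRel.src_mul e)
  simpa [map_mul, Leavitt.p, Leavitt.ed] using h

theorem Leavitt.ed_mul_tgt (k : Type) [CommRing k] (Q : FinQuiver) (e : Q.A) :
    Leavitt.ed k Q e * Leavitt.p k Q (Q.tgt e) = Leavitt.ed k Q e := by
  have h := Leavitt.mk_rel k Q (LeavittRel.mul_tgt e)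
  simpa [map_mul, Leavitt.p, Leavitt.ed] using h

theorem Leavitt.gh_mul_ed_self (k : Type) [CommRing k] (Q : FinQuiver) (e : Q.A) :
    Leavitt.gh k Q e * Leavitt.ed k Q e = Leavitt.p k Q (Q.tgt e) := by
  have h := Leavitt.mk_rel k Q (LeavittRel.ghost_mul_edge_self e)
  simpa [map_mul, Leavitt.p, Leavitt.ed, Leavitt.gh] using h

theorem Leavitt.gh_mul_ed_ne (k : Type) [CommRing k] (Q : FinQuiver) (e f : Q.A) (hef : e ≠ f) :
    Leavitt.gh k Q e * Leavitt.ed k Q f = 0 := by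
  have h := Leavitt.mk_rel k Q (LeavittRel.ghost_mul_edge_ne e f hef)
  simpa [map_mul, Leavitt.p, Leavitt.ed, Leavitt.gh] using h

theorem Leavitt.ck (k : Type) [CommRing k] (Q : FinQuiver) (v : Q.V)
    (hv : ∃ e : Q.A, Q.src e = v) :
    ∑ e ∈ Finset.univ.filter (fun e : Q.A => Q.src e = v),
      Leavitt.ed k Q e * Leavitt.gh k Q e = Leavitt.p k Q v := by
  have h := Leavitt.mk_rel k Q (LeavittRel.cuntz_krieger v hv)
  simpa [map_sum, map_mul, Leavitt.p, Leavitt.ed, Leavitt.gh] using h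

/-! ### Combinatorics of infinite paths -/

/-- A cycle is reachable from `v`. -/
def Bad (Q : FinQuiver) (i : Q.V) : Prop :=
  ∃ v : Q.V, Reaches Q i v ∧ ∃ e : Q.A, Q.src e = v ∧ Reaches Q (Q.tgt e) v

theorem exists_seq (Q : FinQuiver) (S : Q.V → Prop)
    (h : ∀ v, S v → ∃ e, Q.src e = v ∧ S (Q.tgt e)) (v : Q.V) (hv : S v) :
    ∃ x : ℕ → Q.A, Q.src (x 0) = v ∧ (∀ n, Q.tgt (x n) = Q.src (x (n + 1))) ∧
      ∃ a d, 0 < d ∧ ∀ n, x (a + n + d) = x (a + n) := by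
  choose nx hnx1 hnx2 using h
  let F : {v // S v} → {v // S v} := fun u => ⟨Q.tgt (nx u.1 u.2), hnx2 _ _⟩
  let g : ℕ → {v // S v} := fun n => F^[n] ⟨v, hv⟩
  have hg : ∀ n, g (n + 1) = F (g n) := fun n => Function.iterate_succ_apply' F n _
  refine ⟨fun n => nx (g n).1 (g n).2, hnx1 _ _, ?_, ?_⟩
  · intro n
    rw [hnx1]
    rw [hg]
  · have : Finite {v // S v} := inferInstance
    obtain ⟨a, b, hab, hgab⟩ := Finite.exists_ne_map_eq_of_infinite g
    wlog hlt : a < b generalizing a b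
    · exact this b a hab.symm hgab.symm (by omega)
    have key : ∀ n, g (a + n + (b - a)) = g (a + n) := by
      intro n
      induction n with
      | zero =>
        have : a + 0 + (b - a) = b := by omega
        rw [this, ← hgab, add_zero]
      | succ n ih =>
        have e1 : a + (n + 1) + (b - a) = (a + n + (b - a)) + 1 := by omega
        have e2 : a + (n + 1) = (a + n) + 1 := by omega
        rw [e1, e2, hg, hg, ih]
    exact ⟨a, b - a, by omega, fun n => by simp only [key]⟩

theorem Bad.exists_seq {Q : FinQuiver} {i : Q.V} (h : Bad Q i) :
    ∃ x : ℕ → Q.A, Q.src (x 0) = i ∧ (∀ n, Q.tgt (x n) = Q.src (x (n + 1))) ∧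
      ∃ a d, 0 < d ∧ ∀ n, x (a + n + d) = x (a + n) := by
  refine LPA.exists_seq Q (Bad Q) ?_ i h
  rintro v ⟨w, hvw, e, rfl, hew⟩
  cases hvw with
  | refl => exact ⟨e, rfl, _, hew, e, rfl, hew⟩
  | step f hf => exact ⟨f, rfl, _, hf, e, rfl, hew⟩

theorem reaches_seq {Q : FinQuiver} (x : ℕ → Q.A) (hx : ∀ n, Q.tgt (x n) = Q.src (x (n + 1)))
    (a n : ℕ) : Reaches Q (Q.src (x a)) (Q.src (x (a + n))) := by
  induction n generalizing a with
  | zero => exact Reaches.refl _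
  | succ n ih =>
    refine Reaches.step (x a) ?_
    rw [hx]
    have := ih (a + 1)
    rwa [show a + 1 + n = a + (n + 1) by omega] at this

theorem good_induction {Q : FinQuiver} (P : Q.V → Prop)
    (h : ∀ v, (∀ e, Q.src e = v → P (Q.tgt e)) → P v) (v : Q.V) (hv : ¬ Bad Q v) : P v := by
  by_contra hP
  apply hv
  obtain ⟨x, hx0, hx, a, d, hd, hper⟩ := LPA.exists_seq Q (fun v => ¬ P v) (by
    intro v hv
    by_contra hcon
    push Not at hcon
    exact hv (h v hcon)) v hP
  refine ⟨Q.src (x a), ?_, x a, rfl, ?_⟩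
  · have := reaches_seq x hx 0 a
    rwa [hx0, zero_add] at this
  · have h1 := reaches_seq x hx (a + 1) (d - 1)
    have h2 := hper 0
    rw [show a + 1 + (d - 1) = a + 0 + d by omega, h2] at h1
    rw [hx]
    exact h1

/-! ### The representation on infinite paths -/

/-- Infinite paths. -/
abbrev IPath (Q : FinQuiver) : Type :=
  {x : ℕ → Q.A // ∀ n, Q.tgt (x n) = Q.src (x (n + 1))}

def IPath.shift {Q : FinQuiver} (x : IPath Q) : IPath Q :=
  ⟨fun n => x.1 (n + 1), fun n => x.2 (n + 1)⟩

def IPath.cons {Q : FinQuiver} (e : Q.A) (x : IPath Q) (h : Q.tgt e = Q.src (x.1 0)) : IPath Q :=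
  ⟨fun n => Nat.casesOn n e x.1, fun n => by cases n with
    | zero => exact h
    | succ n => exact x.2 n⟩

theorem IPath.shift_cons {Q : FinQuiver} (e : Q.A) (x : IPath Q)
    (h : Q.tgt e = Q.src (x.1 0)) : (IPath.cons e x h).shift = x := rfl

theorem IPath.cons_zero {Q : FinQuiver} (e : Q.A) (x : IPath Q)
    (h : Q.tgt e = Q.src (x.1 0)) : (IPath.cons e x h).1 0 = e := rfl

theorem IPath.cons_shift {Q : FinQuiver} (x : IPath Q) :
    (IPath.cons (x.1 0) x.shift (x.2 0)) = x := by
  apply Subtype.ext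
  funext n
  cases n <;> rfl

/-- The representation space. -/
abbrev MM (k : Type) [Field k] (Q : FinQuiver) : Type := (IPath Q × ℤ) →₀ k

noncomputable section

variable (k : Type) [Field k] (Q : FinQuiver)

def opP (v : Q.V) : Module.End k (MM k Q) :=
  Finsupp.linearCombination k (fun y : IPath Q × ℤ =>
    if Q.src (y.1.1 0) = v then Finsupp.single y (1 : k) else 0)

def opG (e : Q.A) : Module.End k (MM k Q) :=
  Finsupp.linearCombination k (fun y : IPath Q × ℤ =>
    if y.1.1 0 = e then Finsupp.single (y.1.shift, y.2 + 1) (1 : k) else 0)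

def opE (e : Q.A) : Module.End k (MM k Q) :=
  Finsupp.linearCombination k (fun y : IPath Q × ℤ =>
    if h : Q.tgt e = Q.src (y.1.1 0) then
      Finsupp.single (IPath.cons e y.1 h, y.2 - 1) (1 : k) else 0)

theorem opP_single (v : Q.V) (y : IPath Q × ℤ) :
    opP k Q v (Finsupp.single y 1) =
      if Q.src (y.1.1 0) = v then Finsupp.single y (1 : k) else 0 := by
  simp [opP]

theorem opG_single (e : Q.A) (y : IPath Q × ℤ) :
    opG k Q e (Finsupp.single y 1) =
      if y.1.1 0 = e then Finsupp.single (y.1.shift, y.2 + 1) (1 : k) else 0 := by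
  simp [opG]

theorem opE_single (e : Q.A) (y : IPath Q × ℤ) :
    opE k Q e (Finsupp.single y 1) = if h : Q.tgt e = Q.src (y.1.1 0) then
      Finsupp.single (IPath.cons e y.1 h, y.2 - 1) (1 : k) else 0 := by
  simp [opE]

theorem end_ext {f g : Module.End k (MM k Q)}
    (h : ∀ y, f (Finsupp.single y 1) = g (Finsupp.single y 1)) : f = g := by
  refine Finsupp.lhom_ext' fun y => ?_
  ext
  simp [h y]

def opGen : LGen Q → Module.End k (MM k Q)
  | .vertex v => opP k Q v
  | .edge e => opE k Q e
  | .ghost e => opG k Q e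

def rep : Leavitt k Q →ₐ[k] Module.End k (MM k Q) :=
  RingQuot.liftAlgHom k ⟨FreeAlgebra.lift k (opGen k Q), by
    intro x y h
    induction h with
    | vertex_mul_self v =>
      simp only [map_mul, FreeAlgebra.lift_ι_apply, opGen]
      refine end_ext k Q fun y => ?_
      simp only [Module.End.mul_apply, opP_single]
      split_ifs with h <;> simp [opP_single, h]
    | vertex_mul_ne v w h =>
      simp only [map_mul, map_zero, FreeAlgebra.lift_ι_apply, opGen]
      refine end_ext k Q fun y => ?_
      simp only [Module.End.mul_apply, opP_single]
      split_ifs with h1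
      · subst h1
        simp [opP_single, h.symm]
      · simp
    | sum_vertex =>
      simp only [map_sum, map_one, FreeAlgebra.lift_ι_apply, opGen]
      refine end_ext k Q fun y => ?_
      simp [LinearMap.sum_apply, opP_single]
    | src_mul e =>
      simp only [map_mul, FreeAlgebra.lift_ι_apply, opGen]
      refine end_ext k Q fun y => ?_
      simp only [Module.End.mul_apply, opE_single]
      split_ifs with h <;> simp [opP_single, IPath.cons_zero]
    | mul_tgt e =>
      simp only [map_mul, FreeAlgebra.lift_ι_apply, opGen]
      refine end_ext k Q fun y => ?_
      simp only [Module.End.mul_apply, opP_single]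
      split_ifs with h
      · rfl
      · rw [map_zero, opE_single, dif_neg (fun hh => h hh.symm)]
    | tgt_mul_ghost e =>
      simp only [map_mul, FreeAlgebra.lift_ι_apply, opGen]
      refine end_ext k Q fun y => ?_
      simp only [Module.End.mul_apply, opG_single]
      split_ifs with h
      · subst h
        rw [opP_single]
        exact if_pos (y.1.2 0).symm
      · simp
    | ghost_mul_src e =>
      simp only [map_mul, FreeAlgebra.lift_ι_apply, opGen]
      refine end_ext k Q fun y => ?_
      simp only [Module.End.mul_apply, opP_single]
      split_ifs with h
      · rfl
      · rw [map_zero, opG_single, if_neg (fun hh => h (by rw [hh]))]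
    | ghost_mul_edge_self e =>
      simp only [map_mul, FreeAlgebra.lift_ι_apply, opGen]
      refine end_ext k Q fun y => ?_
      simp only [Module.End.mul_apply, opE_single, opP_single]
      split_ifs with h h1 h1
      · rw [opG_single]
        refine (if_pos rfl).trans ?_
        simp [IPath.shift_cons]
      · exact absurd h.symm h1
      · exact absurd h1.symm h
      · simp
    | ghost_mul_edge_ne e f h =>
      simp only [map_mul, map_zero, FreeAlgebra.lift_ι_apply, opGen]
      refine end_ext k Q fun y => ?_
      simp only [Module.End.mul_apply, opE_single]
      split_ifs with h1
      · rw [opG_single, if_neg (by rw [IPath.cons_zero]; exact h.symm)]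
        simp
      · simp
    | cuntz_krieger v h =>
      simp only [map_sum, map_mul, FreeAlgebra.lift_ι_apply, opGen]
      refine end_ext k Q fun y => ?_
      have key : ∀ e, opE k Q e (opG k Q e (Finsupp.single y 1)) =
          if y.1.1 0 = e then Finsupp.single y (1 : k) else 0 := by
        intro e
        rw [opG_single]
        split_ifs with h1
        · subst h1
          rw [opE_single]
          refine (dif_pos (y.1.2 0)).trans ?_
          simp [IPath.cons_shift]
        · simp
      simp only [LinearMap.sum_apply, Module.End.mul_apply, key, opP_single]
      rw [Finset.sum_ite_eq]
      simp⟩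

theorem rep_p (v : Q.V) : rep k Q (Leavitt.p k Q v) = opP k Q v := by
  unfold rep Leavitt.p Leavitt.mk
  erw [RingQuot.liftAlgHom_mkAlgHom_apply]
  simp [opGen]

theorem rep_ed (v : Q.A) : rep k Q (Leavitt.ed k Q v) = opE k Q v := by
  unfold rep Leavitt.ed Leavitt.mk
  erw [RingQuot.liftAlgHom_mkAlgHom_apply]
  simp [opGen]

theorem rep_gh (v : Q.A) : rep k Q (Leavitt.gh k Q v) = opG k Q v := by
  unfold rep Leavitt.gh Leavitt.mk
  erw [RingQuot.liftAlgHom_mkAlgHom_apply]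
  simp [opGen]

theorem rev_p (v : Q.V) : revToLeavitt k Q (PathAlg.p k Q.rev v) = Leavitt.p k Q v := by
  unfold revToLeavitt PathAlg.p PathAlg.mk
  erw [RingQuot.liftAlgHom_mkAlgHom_apply]
  erw [FreeAlgebra.lift_ι_apply]

theorem rev_arrow (e : Q.A) :
    revToLeavitt k Q (PathAlg.arrow k Q.rev e) = Leavitt.gh k Q e := by
  unfold revToLeavitt PathAlg.arrow PathAlg.mk
  erw [RingQuot.liftAlgHom_mkAlgHom_apply]
  erw [FreeAlgebra.lift_ι_apply]

end

theorem one_imp_four (k : Type) [Field k] (Q : FinQuiver) (i : Q.V)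
    (h : FiniteDimensional k ↥(Submodule.restrictScalars k (pIdeal k Q i))) : ¬ Bad Q i := by
  intro hb
  obtain ⟨x, hx0, hx, -⟩ := hb.exists_seq
  let X : IPath Q := ⟨x, hx⟩
  let b : ℕ → IPath Q × ℤ := fun n => (IPath.shift^[n] X, (n : ℤ))
  have hbinj : Function.Injective b := by
    intro m n hmn
    simpa [b] using congrArg Prod.snd hmn
  have hsh : ∀ n m, (IPath.shift^[n] X).1 m = x (m + n) := by
    intro n
    induction n with
    | zero => intro m; rfl
    | succ n ih =>
      intro m
      rw [Function.iterate_succ_apply']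
      change (IPath.shift^[n] X).1 (m + 1) = _
      rw [ih]
      congr 1
      omega
  let Φ : PathAlg k Q.rev →ₗ[k] MM k Q :=
    (LinearMap.applyₗ (Finsupp.single (b 0) (1 : k))) ∘ₗ
      ((rep k Q).comp (revToLeavitt k Q)).toLinearMap
  let K := (Submodule.restrictScalars k (pIdeal k Q i)).map Φ
  have hK : FiniteDimensional k K := inferInstance
  have hy : ∀ n, ∃ y ∈ pIdeal k Q i, Φ y = Finsupp.single (b n) (1 : k) := by
    intro n
    induction n with
    | zero =>
      refine ⟨PathAlg.p k Q.rev i, ⟨1, by simp [rightMul]⟩, ?_⟩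
      change rep k Q (revToLeavitt k Q (PathAlg.p k Q.rev i)) _ = _
      rw [rev_p, rep_p, opP_single]
      exact if_pos hx0
    | succ n ih =>
      obtain ⟨y, hy, hΦ⟩ := ih
      refine ⟨PathAlg.arrow k Q.rev (x n) * y, (pIdeal k Q i).smul_mem _ hy, ?_⟩
      change rep k Q (revToLeavitt k Q (PathAlg.arrow k Q.rev (x n) * y)) _ = _
      change rep k Q (revToLeavitt k Q y) _ = _ at hΦ
      rw [map_mul, map_mul, Module.End.mul_apply, hΦ, rev_arrow, rep_gh, opG_single, if_pos]
      · simp [b, Function.iterate_succ_apply']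
      · rw [hsh, zero_add]
  have hmem : ∀ n, Finsupp.single (b n) (1 : k) ∈ K := by
    intro n
    obtain ⟨y, h1, h2⟩ := hy n
    exact ⟨y, h1, h2⟩
  have hli : LinearIndependent k (fun n => (⟨Finsupp.single (b n) (1 : k), hmem n⟩ : K)) := by
    apply LinearIndependent.of_comp K.subtype
    have := (Finsupp.basisSingleOne (R := k) (ι := IPath Q × ℤ)).linearIndependent.comp b hbinj
    convert this using 1
    funext n
    simp
  exact Infinite.not_finite hli.finite

theorem three_imp_four (k : Type) [Field k] (Q : FinQuiver) (i : Q.V)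
    (h : IsFiniteLength (Leavitt k Q) ↥(pIdealL k Q i)) : ¬ Bad Q i := by
  intro hb
  obtain ⟨x, hx0, hx, a, d, hd, hper⟩ := hb.exists_seq
  let X : IPath Q := ⟨x, hx⟩
  have hsh : ∀ n m, (IPath.shift^[n] X).1 m = x (m + n) := by
    intro n
    induction n with
    | zero => intro m; rfl
    | succ n ih =>
      intro m
      rw [Function.iterate_succ_apply']
      change (IPath.shift^[n] X).1 (m + 1) = _
      rw [ih]
      congr 1
      omega
  let _ : Module (Leavitt k Q) (MM k Q) := Module.compHom _ (rep k Q).toRingHom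
  have hsmul : ∀ (l : Leavitt k Q) (m : MM k Q), l • m = rep k Q l m := fun _ _ => rfl
  let m0 : MM k Q := Finsupp.single (X, 0) 1
  let ψ : ↥(pIdealL k Q i) →ₗ[Leavitt k Q] MM k Q :=
    (LinearMap.toSpanSingleton (Leavitt k Q) (MM k Q) m0) ∘ₗ (pIdealL k Q i).subtype
  let N := LinearMap.range ψ
  have hart : IsArtinian (Leavitt k Q) ↥(pIdealL k Q i) :=
    (isFiniteLength_iff_isNoetherian_isArtinian.mp h).2
  have hartN : IsArtinian (Leavitt k Q) N := inferInstance
  have hm0 : m0 ∈ N := by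
    refine ⟨⟨Leavitt.p k Q i, ⟨1, by simp [rightMul]⟩⟩, ?_⟩
    change Leavitt.p k Q i • m0 = m0
    rw [hsmul, rep_p, opP_single, if_pos hx0]
  have hup : ∀ (y : IPath Q) (n : ℤ), (Finsupp.single (y, n) (1 : k)) ∈ N →
      (Finsupp.single (y.shift, n + 1) (1 : k)) ∈ N := by
    intro y n hy
    have := N.smul_mem (Leavitt.gh k Q (y.1 0)) hy
    rwa [hsmul, rep_gh, opG_single, if_pos rfl] at this
  have hdown : ∀ (y : IPath Q) (n : ℤ), (Finsupp.single (y.shift, n + 1) (1 : k)) ∈ N →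
      (Finsupp.single (y, n) (1 : k)) ∈ N := by
    intro y n hy
    have := N.smul_mem (Leavitt.ed k Q (y.1 0)) hy
    rw [hsmul, rep_ed, opE_single] at this
    have h2 := (dif_pos (c := Q.tgt (y.1 0) = Q.src (y.1 (0 + 1))) (y.2 0)) ▸ this
    simpa [IPath.cons_shift] using h2
  have hups : ∀ n : ℕ, (Finsupp.single (IPath.shift^[n] X, (n : ℤ)) (1 : k)) ∈ N := by
    intro n
    induction n with
    | zero => exact hm0
    | succ n ih =>
      rw [Function.iterate_succ_apply']
      push_cast
      exact hup _ _ ih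
  have hdowns : ∀ (n : ℕ) (c : ℤ), (Finsupp.single (IPath.shift^[n] X, c + n) (1 : k)) ∈ N →
      (Finsupp.single (X, c) (1 : k)) ∈ N := by
    intro n
    induction n with
    | zero => intro c hc; simpa using hc
    | succ n ih =>
      intro c hc
      apply ih
      apply hdown
      rw [Function.iterate_succ_apply'] at hc
      push_cast at hc
      rwa [add_assoc]
  have hXd : IPath.shift^[a + d] X = IPath.shift^[a] X := by
    apply Subtype.ext
    funext m
    rw [hsh, hsh]
    have := hper m
    rwa [show m + (a + d) = a + m + d by omega, show m + a = a + m by omega]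
  have hd0 : (Finsupp.single (X, (d : ℤ)) (1 : k)) ∈ N := by
    apply hdowns a
    have := hups (a + d)
    rw [hXd] at this
    push_cast at this
    rwa [add_comm]
  -- the translation operator
  let T : MM k Q →ₗ[k] MM k Q := Finsupp.lmapDomain k k (fun y => (y.1, y.2 + (d : ℤ)))
  have hT1 : ∀ y, T (Finsupp.single y 1) = Finsupp.single (y.1, y.2 + (d : ℤ)) 1 := by
    intro y
    simp [T, Finsupp.mapDomain_single]
  have hTgen : ∀ g : LGen Q, opGen k Q g * T = T * opGen k Q g := by
    intro g
    refine end_ext k Q fun y => ?_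
    simp only [Module.End.mul_apply, hT1]
    cases g with
    | vertex v =>
      simp only [opGen, opP_single]
      split_ifs <;> simp [hT1]
    | edge e =>
      simp only [opGen, opE_single]
      split_ifs
      · rw [hT1]
        congr 2
        ring
      · simp
    | ghost e =>
      simp only [opGen, opG_single]
      split_ifs
      · rw [hT1]
        congr 2
        ring
      · simp
  have hTcomm : ∀ l : Leavitt k Q, rep k Q l * T = T * rep k Q l := by
    intro l
    obtain ⟨f, rfl⟩ : ∃ f, Leavitt.mk k Q f = l := RingQuot.mkAlgHom_surjective k _ l
    induction f using FreeAlgebra.induction with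
    | grade0 r =>
      rw [AlgHom.commutes, AlgHom.commutes]
      exact Algebra.commutes r T
    | grade1 g =>
      have : rep k Q (Leavitt.mk k Q (FreeAlgebra.ι k g)) = opGen k Q g := by
        cases g with
        | vertex v => exact rep_p k Q v
        | edge e => exact rep_ed k Q e
        | ghost e => exact rep_gh k Q e
      rw [this, hTgen]
    | mul a b ha hb =>
      rw [map_mul, map_mul, mul_assoc, hb, ← mul_assoc, ha, mul_assoc]
    | add a b ha hb =>
      rw [map_add, map_add, add_mul, ha, hb, mul_add]
  let TL : MM k Q →ₗ[Leavitt k Q] MM k Q :=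
    { toFun := fun m => m - T m
      map_add' := fun m n => by rw [map_add]; abel
      map_smul' := fun l m => by
        have := LinearMap.congr_fun (hTcomm l) m
        simp only [Module.End.mul_apply] at this
        simp only [hsmul, RingHom.id_apply]
        rw [map_sub, this] }
  have hTN : ∀ m ∈ N, TL m ∈ N := by
    rintro _ ⟨l, rfl⟩
    change TL (l.1 • m0) ∈ N
    rw [map_smul]
    refine N.smul_mem _ ?_
    change m0 - T m0 ∈ N
    refine N.sub_mem hm0 ?_
    rw [hT1]
    simpa using hd0
  have hinj : ∀ m : MM k Q, m = T m → m = 0 := by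
    intro m hm
    have hinjf : Function.Injective (fun y : IPath Q × ℤ => (y.1, y.2 + (d : ℤ))) := by
      rintro ⟨y, n⟩ ⟨z, l⟩ hyz
      simpa using hyz
    have h1 : ∀ y n, m (y, n + d) = m (y, n) := by
      intro y n
      conv_lhs => rw [hm]
      exact Finsupp.mapDomain_apply hinjf m (y, n)
    have h2 : ∀ y n (j : ℕ), m (y, n + j * d) = m (y, n) := by
      intro y n j
      induction j with
      | zero => simp
      | succ j ih =>
        rw [← ih, ← h1 y (n + j * d)]
        congr 2
        push_cast
        ring
    ext ⟨y, n⟩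
    by_contra hne
    have hinf : (Set.range (fun j : ℕ => (y, n + (j : ℤ) * d))).Infinite := by
      apply Set.infinite_range_of_injective
      intro j l hjl
      have hd' : (d : ℤ) ≠ 0 := by exact_mod_cast hd.ne'
      simpa [hd', hd.ne'] using hjl
    apply hinf
    refine m.support.finite_toSet.subset ?_
    rintro _ ⟨j, rfl⟩
    simp only [Finset.mem_coe, Finsupp.mem_support_iff]
    rw [h2]
    exact hne
  let f : N →ₗ[Leavitt k Q] N := TL.restrict hTN
  have hf : Function.Injective f := by
    rw [injective_iff_map_eq_zero]
    rintro ⟨m, hm⟩ h0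
    have : m - T m = 0 := congrArg Subtype.val h0
    exact Subtype.ext (hinj m (sub_eq_zero.mp this))
  have hsurj := IsArtinian.surjective_of_injective_endomorphism f hf
  obtain ⟨⟨m, hm⟩, hmm⟩ := hsurj ⟨m0, hm0⟩
  have hmm' : m - T m = m0 := congrArg Subtype.val hmm
  let aug : MM k Q →ₗ[k] k := Finsupp.linearCombination k (fun _ => (1 : k))
  have haug : aug ∘ₗ T = aug := by
    refine Finsupp.lhom_ext' fun y => ?_
    ext
    simp [aug, T, Finsupp.mapDomain_single]
  have := congrArg aug hmm'
  rw [map_sub, ← LinearMap.comp_apply, haug, sub_self] at this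
  simp [aug, m0] at this

theorem four_imp_one (k : Type) [Field k] (Q : FinQuiver) (i : Q.V) (h : ¬ Bad Q i) :
    FiniteDimensional k ↥(Submodule.restrictScalars k (pIdeal k Q i)) := by
  refine good_induction
    (fun v => FiniteDimensional k ↥(Submodule.restrictScalars k (pIdeal k Q v))) ?_ i h
  intro v ih
  let PA := PathAlg k Q.rev
  let U : {e : Q.A // Q.src e = v} → Submodule k PA := fun e =>
    (Submodule.restrictScalars k (pIdeal k Q (Q.tgt e.1))).map
      (LinearMap.mulRight k (PathAlg.arrow k Q.rev e.1))
  let W : Submodule k PA := Submodule.span k {PathAlg.p k Q.rev v} ⊔ ⨆ e, U e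
  have hU : ∀ e, FiniteDimensional k (U e) := by
    intro e
    have := ih e.1 e.2
    exact inferInstance
  have hW : FiniteDimensional k W := inferInstance
  have hUL : ∀ e (l y : PA), y ∈ U e → l * y ∈ U e := by
    rintro e l _ ⟨z, hz, rfl⟩
    refine ⟨l * z, (pIdeal k Q _).smul_mem l hz, ?_⟩
    simp [mul_assoc]
  have hUL' : ∀ (l y : PA), y ∈ (⨆ e, U e) → l * y ∈ (⨆ e, U e) := by
    intro l y hy
    have : (⨆ e, U e) ≤ (⨆ e, U e).comap (LinearMap.mulLeft k l) := by
      refine iSup_le fun e y hy => ?_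
      exact Submodule.mem_iSup_of_mem e (hUL e l y hy)
    exact this hy
  have hgen : ∀ (g : PathGen Q.rev), PathAlg.mk k Q.rev (FreeAlgebra.ι k g) *
      PathAlg.p k Q.rev v ∈ W := by
    intro g
    cases g with
    | vertex w =>
      change PathAlg.p k Q.rev w * PathAlg.p k Q.rev v ∈ W
      by_cases hwv : w = v
      · rw [hwv]
        erw [PathAlg.p_mul_self]
        exact Submodule.mem_sup_left (Submodule.mem_span_singleton_self _)
      · rw [PathAlg.p_mul_ne k Q.rev w v hwv]
        exact W.zero_mem
    | edge e =>
      change PathAlg.arrow k Q.rev e * PathAlg.p k Q.rev v ∈ W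
      have ht : PathAlg.arrow k Q.rev e * PathAlg.p k Q.rev (Q.src e) = PathAlg.arrow k Q.rev e :=
        PathAlg.arrow_mul_tgt k Q.rev e
      by_cases hev : Q.src e = v
      · rw [← hev, ht]
        refine Submodule.mem_sup_right (Submodule.mem_iSup_of_mem ⟨e, hev⟩ ?_)
        refine ⟨PathAlg.p k Q.rev (Q.tgt e), ⟨1, by simp [rightMul]⟩, ?_⟩
        exact PathAlg.src_mul_arrow k Q.rev e
      · rw [← ht, mul_assoc, PathAlg.p_mul_ne k Q.rev _ _ hev, mul_zero]
        exact W.zero_mem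
  have hall : ∀ (l y : PA), y ∈ W → l * y ∈ W := by
    intro l
    obtain ⟨f, rfl⟩ : ∃ f, PathAlg.mk k Q.rev f = l := RingQuot.mkAlgHom_surjective k _ l
    induction f using FreeAlgebra.induction with
    | grade0 r =>
      intro y hy
      rw [AlgHom.commutes, ← Algebra.smul_def]
      exact W.smul_mem r hy
    | grade1 g =>
      intro y hy
      obtain ⟨s, hs, u, hu, rfl⟩ := Submodule.mem_sup.mp hy
      obtain ⟨c, rfl⟩ := Submodule.mem_span_singleton.mp hs
      rw [mul_add, mul_smul_comm]
      exact W.add_mem (W.smul_mem c (hgen g)) (Submodule.mem_sup_right (hUL' _ _ hu))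
    | mul a b ha hb =>
      intro y hy
      rw [map_mul, mul_assoc]
      exact ha _ (hb _ hy)
    | add a b ha hb =>
      intro y hy
      rw [map_add, add_mul]
      exact W.add_mem (ha _ hy) (hb _ hy)
  have hle : Submodule.restrictScalars k (pIdeal k Q v) ≤ W := by
    rintro _ ⟨l, rfl⟩
    exact hall l _ (Submodule.mem_sup_left (Submodule.mem_span_singleton_self _))
  exact Submodule.finiteDimensional_of_le hle

/-! ### Sinks -/

noncomputable def elP (k : Type) [Field k] (Q : FinQuiver) (w : Q.V) : List Q.A → Leavitt k Q
  | [] => Leavitt.p k Q w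
  | e :: l => Leavitt.ed k Q e * elP k Q w l

noncomputable def elG (k : Type) [Field k] (Q : FinQuiver) (w : Q.V) : List Q.A → Leavitt k Q
  | [] => Leavitt.p k Q w
  | e :: l => elG k Q w l * Leavitt.gh k Q e

section
variable (k : Type) [Field k] (Q : FinQuiver) (w : Q.V)

theorem p_mul_ed (v : Q.V) (e : Q.A) : Leavitt.p k Q v * Leavitt.ed k Q e = Leavitt.ed k Q e ∨
    Leavitt.p k Q v * Leavitt.ed k Q e = 0 := by
  by_cases h : v = Q.src e
  · left
    rw [h, Leavitt.src_mul_ed]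
  · right
    rw [← Leavitt.src_mul_ed, ← mul_assoc, Leavitt.p_mul_ne k Q _ _ h, zero_mul]

theorem p_mul_elP (v : Q.V) (l : List Q.A) :
    Leavitt.p k Q v * elP k Q w l = elP k Q w l ∨ Leavitt.p k Q v * elP k Q w l = 0 := by
  cases l with
  | nil =>
    by_cases h : v = w
    · left
      rw [h]
      exact Leavitt.p_mul_self k Q w
    · right
      exact Leavitt.p_mul_ne k Q _ _ h
  | cons e l =>
    simp only [elP, ← mul_assoc]
    rcases p_mul_ed k Q v e with h | h
    · left
      rw [h]
    · right
      rw [h, zero_mul]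

theorem elG_mul_elP_self (l : List Q.A) :
    elG k Q w l * elP k Q w l = Leavitt.p k Q w ∨ elP k Q w l = 0 := by
  induction l with
  | nil => exact Or.inl (Leavitt.p_mul_self k Q w)
  | cons e l ih =>
    simp only [elP, elG]
    have h1 : elG k Q w l * Leavitt.gh k Q e * (Leavitt.ed k Q e * elP k Q w l) =
        elG k Q w l * (Leavitt.p k Q (Q.tgt e) * elP k Q w l) := by
      rw [← Leavitt.gh_mul_ed_self]
      simp only [mul_assoc]
    rw [h1]
    rcases p_mul_elP k Q w (Q.tgt e) l with h | h
    · rw [h]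
      rcases ih with h2 | h2
      · exact Or.inl h2
      · right
        rw [h2, mul_zero]
    · right
      rw [← Leavitt.ed_mul_tgt, mul_assoc, h, mul_zero]

variable {w}

theorem sink_mul_ed (hw : IsSink Q w) (e : Q.A) : Leavitt.p k Q w * Leavitt.ed k Q e = 0 := by
  rw [← Leavitt.src_mul_ed, ← mul_assoc, Leavitt.p_mul_ne k Q _ _ (hw e).symm, zero_mul]

theorem gh_mul_sink (hw : IsSink Q w) (e : Q.A) : Leavitt.gh k Q e * Leavitt.p k Q w = 0 := by
  rw [← Leavitt.gh_mul_src, mul_assoc, Leavitt.p_mul_ne k Q _ _ (hw e), mul_zero]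

theorem elG_mul_elP_ne (hw : IsSink Q w) (l l' : List Q.A) (h : l ≠ l') : elG k Q w l * elP k Q w l' = 0 := by
  induction l generalizing l' with
  | nil =>
    cases l' with
    | nil => exact absurd rfl h
    | cons f l' =>
      simp only [elP, elG]
      rw [← mul_assoc, sink_mul_ed k Q hw, zero_mul]
  | cons e l ih =>
    cases l' with
    | nil =>
      simp only [elP, elG]
      rw [mul_assoc, gh_mul_sink k Q hw, mul_zero]
    | cons f l' =>
      simp only [elP, elG]
      have h1 : elG k Q w l * Leavitt.gh k Q e * (Leavitt.ed k Q f * elP k Q w l') =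
          elG k Q w l * (Leavitt.gh k Q e * Leavitt.ed k Q f * elP k Q w l') := by
        simp only [mul_assoc]
      rw [h1]
      by_cases hef : e = f
      · subst hef
        rw [Leavitt.gh_mul_ed_self]
        rcases p_mul_elP k Q w (Q.tgt e) l' with h2 | h2
        · rw [h2]
          exact ih l' (fun h3 => h (by rw [h3]))
        · rw [h2, mul_zero]
      · rw [Leavitt.gh_mul_ed_ne k Q _ _ hef, zero_mul, mul_zero]

theorem gh_mul_elP (hw : IsSink Q w) (e : Q.A) (l : List Q.A) : Leavitt.gh k Q e * elP k Q w l ∈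
    Submodule.span k (Set.range (elP k Q w)) := by
  cases l with
  | nil =>
    simp only [elP]
    rw [gh_mul_sink k Q hw]
    exact Submodule.zero_mem _
  | cons f l =>
    simp only [elP]
    rw [← mul_assoc]
    by_cases hef : e = f
    · subst hef
      rw [Leavitt.gh_mul_ed_self]
      rcases p_mul_elP k Q w (Q.tgt e) l with h2 | h2
      · rw [h2]
        exact Submodule.subset_span ⟨l, rfl⟩
      · rw [h2]
        exact Submodule.zero_mem _
    · rw [Leavitt.gh_mul_ed_ne k Q _ _ hef, zero_mul]
      exact Submodule.zero_mem _

theorem mul_mem_span (hw : IsSink Q w) (l y : Leavitt k Q) (hy : y ∈ Submodule.span k (Set.range (elP k Q w))) :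
    l * y ∈ Submodule.span k (Set.range (elP k Q w)) := by
  obtain ⟨f, rfl⟩ : ∃ f, Leavitt.mk k Q f = l := RingQuot.mkAlgHom_surjective k _ l
  induction f using FreeAlgebra.induction generalizing y with
  | grade0 r =>
    rw [AlgHom.commutes, ← Algebra.smul_def]
    exact Submodule.smul_mem _ r hy
  | grade1 g =>
    have : Submodule.span k (Set.range (elP k Q w)) ≤
        (Submodule.span k (Set.range (elP k Q w))).comap
          (LinearMap.mulLeft k (Leavitt.mk k Q (FreeAlgebra.ι k g))) := by
      rw [Submodule.span_le]
      rintro _ ⟨m, rfl⟩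
      change Leavitt.mk k Q (FreeAlgebra.ι k g) * elP k Q w m ∈
        Submodule.span k (Set.range (elP k Q w))
      cases g with
      | vertex v =>
        change Leavitt.p k Q v * elP k Q w m ∈ _
        rcases p_mul_elP k Q w v m with h2 | h2
        · rw [h2]
          exact Submodule.subset_span ⟨m, rfl⟩
        · rw [h2]
          exact Submodule.zero_mem _
      | edge e => exact Submodule.subset_span ⟨e :: m, rfl⟩
      | ghost e => exact gh_mul_elP k Q hw e m
    exact this hy
  | mul a b ha hb =>
    rw [map_mul, mul_assoc]
    exact ha _ (hb _ hy)
  | add a b ha hb =>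
    rw [map_add, add_mul]
    exact Submodule.add_mem _ (ha _ hy) (hb _ hy)

theorem sink_key (hw : IsSink Q w) (x : Leavitt k Q) (hx : x ∈ pIdealL k Q w) (hx0 : x ≠ 0) :
    ∃ y, y * x = Leavitt.p k Q w := by
  have hmem : x ∈ Submodule.span k (Set.range (elP k Q w)) := by
    obtain ⟨l, rfl⟩ := hx
    exact mul_mem_span k Q hw l _ (Submodule.subset_span ⟨[], rfl⟩)
  obtain ⟨c, rfl⟩ := (Finsupp.mem_span_range_iff_exists_finsupp).mp hmem
  have : ∃ l ∈ c.support, c l • elP k Q w l ≠ 0 := Finset.exists_ne_zero_of_sum_ne_zero hx0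
  obtain ⟨l, hl, hne⟩ := this
  have hcl : c l ≠ 0 := Finsupp.mem_support_iff.mp hl
  refine ⟨(c l)⁻¹ • elG k Q w l, ?_⟩
  have hs : elG k Q w l * elP k Q w l = Leavitt.p k Q w := by
    rcases elG_mul_elP_self k Q w l with h | h
    · exact h
    · rw [h, smul_zero] at hne
      exact absurd rfl hne
  rw [smul_mul_assoc, Finsupp.sum, Finset.mul_sum, Finset.sum_eq_single l]
  · rw [mul_smul_comm, hs, smul_smul, inv_mul_cancel₀ hcl, one_smul]
  · intro m _ hm
    rw [mul_smul_comm, elG_mul_elP_ne k Q hw _ _ hm.symm, smul_zero]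
  · intro h
    exact absurd hl h

theorem sink_semisimple (hw : IsSink Q w) : IsSemisimpleModule (Leavitt k Q) ↥(pIdealL k Q w) := by
  by_cases htriv : Subsingleton ↥(pIdealL k Q w)
  · have : ComplementedLattice (Submodule (Leavitt k Q) ↥(pIdealL k Q w)) :=
      ⟨fun a => ⟨a, by
        rw [Subsingleton.elim a ⊥]
        exact ⟨disjoint_bot_left, by rw [codisjoint_iff]; exact Subsingleton.elim _ _⟩⟩⟩
    constructor
  · have hnt : Nontrivial ↥(pIdealL k Q w) := not_subsingleton_iff_nontrivial.mp htriv
    have : IsSimpleModule (Leavitt k Q) ↥(pIdealL k Q w) := by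
      rw [isSimpleModule_iff_toSpanSingleton_surjective]
      refine ⟨hnt, ?_⟩
      rintro ⟨x, hx⟩ hx0 ⟨_, ⟨z, rfl⟩⟩
      obtain ⟨y, hy⟩ := sink_key k Q hw x hx (fun h => hx0 (Subtype.ext h))
      refine ⟨z * y, Subtype.ext ?_⟩
      change z * y * x = z * Leavitt.p k Q w
      rw [mul_assoc, hy]
    infer_instance

end

theorem four_imp_semisimple (k : Type) [Field k] (Q : FinQuiver) (i : Q.V) (h : ¬ Bad Q i) :
    IsSemisimpleModule (Leavitt k Q) ↥(pIdealL k Q i) := by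
  refine good_induction
    (fun v => IsSemisimpleModule (Leavitt k Q) ↥(pIdealL k Q v)) ?_ i h
  intro v ih
  by_cases hs : IsSink Q v
  · exact sink_semisimple k Q hs
  · have hv : ∃ e : Q.A, Q.src e = v := by
      unfold IsSink at hs
      push Not at hs
      exact hs
    let U : {e : Q.A // Q.src e = v} → Submodule (Leavitt k Q) (Leavitt k Q) := fun e =>
      (pIdealL k Q (Q.tgt e.1)).map (rightMul _ (Leavitt.gh k Q e.1))
    have hU : ∀ e, IsSemisimpleModule (Leavitt k Q) (U e) := by
      intro e
      have := ih e.1 e.2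
      exact IsSemisimpleModule.of_surjective _
        ((rightMul _ (Leavitt.gh k Q e.1)).submoduleMap_surjective (pIdealL k Q (Q.tgt e.1)))
    have hsup : IsSemisimpleModule (Leavitt k Q) ↥(⨆ e, U e) := by
      have := isSemisimpleModule_biSup_of_isSemisimpleModule_submodule
        (s := Set.univ) (p := U) (fun e _ => hU e)
      rwa [iSup_univ] at this
    have hle : pIdealL k Q v ≤ ⨆ e, U e := by
      rintro _ ⟨l, rfl⟩
      change l * Leavitt.p k Q v ∈ _
      rw [← Leavitt.ck k Q v hv, Finset.mul_sum]
      refine Submodule.sum_mem _ fun e he => ?_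
      refine Submodule.mem_iSup_of_mem ⟨e, (Finset.mem_filter.mp he).2⟩ ?_
      refine ⟨l * Leavitt.ed k Q e, ⟨l * Leavitt.ed k Q e, ?_⟩, ?_⟩
      · change l * Leavitt.ed k Q e * Leavitt.p k Q (Q.tgt e) = _
        rw [mul_assoc, Leavitt.ed_mul_tgt]
      · change l * Leavitt.ed k Q e * Leavitt.gh k Q e = _
        rw [mul_assoc]
    exact IsSemisimpleModule.of_injective _ (Submodule.inclusion_injective hle)

theorem pIdealL_finite (k : Type) [Field k] (Q : FinQuiver) (i : Q.V) :
    Module.Finite (Leavitt k Q) ↥(pIdealL k Q i) := by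
  unfold pIdealL
  infer_instance

theorem four_imp_two (k : Type) [Field k] (Q : FinQuiver) (i : Q.V) (h : ¬ Bad Q i) :
    ∃ (n : ℕ) (f : Fin n → Submodule (Leavitt k Q) ↥(pIdealL k Q i)),
       (∀ j, IsSimpleModule (Leavitt k Q) ↥(f j)) ∧ DirectSum.IsInternal f := by
  have h1 := four_imp_semisimple k Q i h
  have h2 := pIdealL_finite k Q i
  obtain ⟨s, hs1, hs2, hs3⟩ :=
    IsSemisimpleModule.exists_sSupIndep_sSup_simples_eq_top (Leavitt k Q) ↥(pIdealL k Q i)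
  have hfin : s.Finite := by
    apply WellFoundedGT.finite_of_sSupIndep hs1
  have : Finite s := hfin
  let e := Finite.equivFin s
  refine ⟨Nat.card s, fun j => (e.symm j).1, fun j => hs3 _ (e.symm j).2, ?_⟩
  rw [DirectSum.isInternal_submodule_iff_iSupIndep_and_iSup_eq_top]
  constructor
  · exact (sSupIndep_iff s |>.mp hs1).comp e.symm.injective
  · rw [← hs2, sSup_eq_iSup']
    exact e.symm.iSup_comp (g := fun x : s => x.1)

theorem two_imp_three (k : Type) [Field k] (Q : FinQuiver) (i : Q.V)
    (h : ∃ (n : ℕ) (f : Fin n → Submodule (Leavitt k Q) ↥(pIdealL k Q i)),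
       (∀ j, IsSimpleModule (Leavitt k Q) ↥(f j)) ∧ DirectSum.IsInternal f) :
    IsFiniteLength (Leavitt k Q) ↥(pIdealL k Q i) := by
  obtain ⟨n, f, hf, hint⟩ := h
  have h2 := pIdealL_finite k Q i
  have htop := hint.submodule_iSup_eq_top
  have : IsSemisimpleModule (Leavitt k Q) ↥(pIdealL k Q i) :=
    isSemisimpleModule_of_isSemisimpleModule_submodule' (p := f) (fun j => inferInstance) htop
  rw [isFiniteLength_iff_isNoetherian_isArtinian]
  exact ⟨inferInstance, inferInstance⟩

end LPA

open LPA in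
/-- For a vertex `i` of a finite quiver `E`, the following are equivalent:
(1) `P_k(Ē)·p_i` is finite-dimensional over `k`;
(2) `L_k(E)·p_i` is a finite direct sum of simple submodules;
(3) `L_k(E)·p_i` has finite length;
(4) no cycle of `E` can be reached by a path starting at `i`. -/
theorem statement_15 (k : Type) [Field k] (Q : FinQuiver) (i : Q.V) :
    [FiniteDimensional k ↥(Submodule.restrictScalars k (pIdeal k Q i)),
     ∃ (n : ℕ) (f : Fin n → Submodule (Leavitt k Q) ↥(pIdealL k Q i)),
       (∀ j, IsSimpleModule (Leavitt k Q) ↥(f j)) ∧ DirectSum.IsInternal f,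
     IsFiniteLength (Leavitt k Q) ↥(pIdealL k Q i),
     ¬ ∃ v : Q.V, Reaches Q i v ∧ ∃ e : Q.A, Q.src e = v ∧ Reaches Q (Q.tgt e) v].TFAE := by
  tfae_have 1 → 4 := one_imp_four k Q i
  tfae_have 4 → 1 := four_imp_one k Q i
  tfae_have 4 → 2 := four_imp_two k Q i
  tfae_have 2 → 3 := two_imp_three k Q i
  tfae_have 3 → 4 := three_imp_four k Q i
  tfae_finish
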